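/- arXiv:1803.06491 — 3 statements merged into one kernel-verified Lean document; each statement's English description precedes it below -/
import Mathlib

section
/- For every invertible antidiagonal matrix J = Σ_{i=1}^N c_i E_{i,N−i+1} (all c_i ∈ ℂ^×) and every u ∈ ℂ^× with u ≠ q^2 and u ≠ q^{-2}, one has (J⊗J) R(u) (J⊗J)^{-1} = P R(u) P, and moreover P R(u) P = R(u)^T, where T denotes the full transpose on N²×N² matrices. -/
/-!
Both identities come from three symmetries of the entries `X_{(a,b),(c,d)}` that hold for `R_q`,
hence for `P R_{q⁻¹} P`, hence for every linear combination of the two: `X` is invariant under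
reversing all four indices while exchanging the two tensor factors, exchanging the tensor factors
amounts to transposing `X`, and `X` conserves weight, i.e. its entries vanish unless `(c,d)` is
`(a,b)` or `(b,a)` (`FlipSymm`, `flipSymm_RBJ`).

The second symmetry is the identity `P R P = Rᵀ`. For the first identity, `J` maps the basis
vector with index `N + 1 - i` to `c_i` times that with index `i`, so `(J ⊗ J) R = (P R P) (J ⊗ J)`
entrywise compares index-reversed entries of `R`. The scalars `c_a c_b` agree on the two sides by
weight conservation.
-/

open Matrix
open scoped Kronecker

noncomputable section

/-- 1-based matrix unit `E_{a b}` in the `N × N` complex matrices. -/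
def Em (N : ℕ) (a b : ℕ) : Matrix (Fin N) (Fin N) ℂ :=
  Matrix.of fun i j => if (i : ℕ) + 1 = a ∧ (j : ℕ) + 1 = b then 1 else 0

/-- The flip (permutation) operator `P = Σ_{i,j} E_{ij} ⊗ E_{ji}`. -/
def Pmat (N : ℕ) : Matrix (Fin N × Fin N) (Fin N × Fin N) ℂ :=
  ∑ i ∈ Finset.Icc 1 N, ∑ j ∈ Finset.Icc 1 N, Em N i j ⊗ₖ Em N j i

/-- The constant R-matrix `R_q`. -/
def Rconst (N : ℕ) (q : ℂ) : Matrix (Fin N × Fin N) (Fin N × Fin N) ℂ :=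
  (∑ i ∈ Finset.Icc 1 N, ∑ j ∈ Finset.Icc 1 N,
      (if i = j then q else 1) • (Em N i i ⊗ₖ Em N j j))
    + ∑ i ∈ Finset.Icc 1 N, ∑ j ∈ Finset.Icc 1 N,
        (if i < j then q - q⁻¹ else 0) • (Em N i j ⊗ₖ Em N j i)

/-- `f_q(u) = 1/(q - q⁻¹ u)`. -/
def fBJ (q u : ℂ) : ℂ := (q - q⁻¹ * u)⁻¹

/-- The Bazhanov–Jimbo R-matrix `R(u) = f_q(u) R_q + f_{q⁻¹}(u⁻¹) P R_{q⁻¹} P`. -/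
def RBJ (N : ℕ) (q u : ℂ) : Matrix (Fin N × Fin N) (Fin N × Fin N) ℂ :=
  fBJ q u • Rconst N q + fBJ q⁻¹ u⁻¹ • (Pmat N * Rconst N q⁻¹ * Pmat N)

/-- `X1 = X ⊗ I`. -/
def M1 (N : ℕ) (X : Matrix (Fin N) (Fin N) ℂ) : Matrix (Fin N × Fin N) (Fin N × Fin N) ℂ :=
  X ⊗ₖ (1 : Matrix (Fin N) (Fin N) ℂ)

/-- `X2 = I ⊗ X`. -/
def M2 (N : ℕ) (X : Matrix (Fin N) (Fin N) ℂ) : Matrix (Fin N × Fin N) (Fin N × Fin N) ℂ :=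
  (1 : Matrix (Fin N) (Fin N) ℂ) ⊗ₖ X

/-- `R21(u) = P R(u) P`. -/
def R21 (N : ℕ) (q u : ℂ) : Matrix (Fin N × Fin N) (Fin N × Fin N) ℂ :=
  Pmat N * RBJ N q u * Pmat N

/-- Transposition in the first tensor factor. -/
def t1 (N : ℕ) (X : Matrix (Fin N × Fin N) (Fin N × Fin N) ℂ) :
    Matrix (Fin N × Fin N) (Fin N × Fin N) ℂ :=
  Matrix.of fun p r => X (r.1, p.2) (p.1, r.2)

/-- The charge conjugation matrix `C = Σ_i (-q)^i E_{ī i}` where `ī = N+1-i`. -/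
def Cmat (N : ℕ) (q : ℂ) : Matrix (Fin N) (Fin N) ℂ :=
  ∑ i ∈ Finset.Icc 1 N, (-q) ^ i • Em N (N + 1 - i) i

/-- The C-conjugated R-matrix `R^∨(u) = C2⁻¹ R^{t1}(q̃² u⁻¹) C2` with `q̃ = s^N`. -/
def Rvee (N : ℕ) (q s u : ℂ) : Matrix (Fin N × Fin N) (Fin N × Fin N) ℂ :=
  (M2 N (Cmat N q))⁻¹ * t1 N (RBJ N q ((s ^ N) ^ 2 * u⁻¹)) * M2 N (Cmat N q)

/-- `R^∨21(u) = P R^∨(u) P`. -/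
def Rvee21 (N : ℕ) (q s u : ℂ) : Matrix (Fin N × Fin N) (Fin N × Fin N) ℂ :=
  Pmat N * Rvee N q s u * Pmat N

/-- The untwisted reflection equation at spectral parameters `(u, v)`. -/
def REeq (N : ℕ) (q : ℂ) (K : ℂ → Matrix (Fin N) (Fin N) ℂ) (u v : ℂ) : Prop :=
  R21 N q (u / v) * M1 N (K u) * RBJ N q (u * v) * M2 N (K v)
    = M2 N (K v) * R21 N q (u * v) * M1 N (K u) * RBJ N q (u / v)

/-- `K` satisfies the untwisted reflection equation (RE) for all `u, v`
for which all factors are defined. -/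
def IsRESol (N : ℕ) (q : ℂ) (K : ℂ → Matrix (Fin N) (Fin N) ℂ) : Prop :=
  ∀ u v : ℂ, u ≠ 0 → v ≠ 0 → u / v ≠ q ^ 2 → u / v ≠ q⁻¹ ^ 2 →
    u * v ≠ q ^ 2 → u * v ≠ q⁻¹ ^ 2 → REeq N q K u v

/-- The cross-conjugated twisted reflection equation at `(u, v)`. -/
def CtREeq (N : ℕ) (q s : ℂ) (K : ℂ → Matrix (Fin N) (Fin N) ℂ) (u v : ℂ) : Prop :=
  R21 N q (u / v) * M1 N (K u) * Rvee N q s (u * v) * M2 N (K v)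
    = M2 N (K v) * Rvee21 N q s (u * v) * M1 N (K u) * RBJ N q (u / v)

/-- `K` satisfies the cross-conjugated twisted reflection equation (CtRE) for all
`u, v` for which all factors are defined. -/
def IsCtRESol (N : ℕ) (q s : ℂ) (K : ℂ → Matrix (Fin N) (Fin N) ℂ) : Prop :=
  ∀ u v : ℂ, u ≠ 0 → v ≠ 0 → u / v ≠ q ^ 2 → u / v ≠ q⁻¹ ^ 2 →
    (s ^ N) ^ 2 * (u * v)⁻¹ ≠ q ^ 2 → (s ^ N) ^ 2 * (u * v)⁻¹ ≠ q⁻¹ ^ 2 →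
    CtREeq N q s K u v

/-- Transposition across the antidiagonal: `(M^w)_{ij} = M_{N+1-j, N+1-i}`. -/
def wT (N : ℕ) (M : Matrix (Fin N) (Fin N) ℂ) : Matrix (Fin N) (Fin N) ℂ :=
  Matrix.of fun i j => M (Fin.rev j) (Fin.rev i)

lemma Em_succ (N : ℕ) (a b : Fin N) : Em N (a + 1) (b + 1) = Matrix.single a b 1 := by
  ext i j
  simp only [Em, Matrix.of_apply, Matrix.single_apply, Nat.add_right_cancel_iff, Fin.val_inj]
  simp only [eq_comm]

lemma sum_Icc_fin {M : Type*} [AddCommMonoid M] (N : ℕ) (g : ℕ → M) :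
    ∑ i ∈ Finset.Icc 1 N, g i = ∑ i : Fin N, g (i + 1) := by
  rw [Fin.sum_univ_eq_sum_range (fun i => g (i + 1)) N]
  induction N with
  | zero => simp
  | succ n ih => rw [Finset.sum_Icc_succ_top (by omega), ih, Finset.sum_range_succ]

lemma Pmat_apply (N : ℕ) (p r : Fin N × Fin N) :
    Pmat N p r = if p = r.swap then 1 else 0 := by
  obtain ⟨a, b⟩ := p
  obtain ⟨c, d⟩ := r
  simp only [Pmat, sum_Icc_fin, Em_succ, Matrix.sum_apply, Matrix.kronecker_apply,
    Matrix.single_apply, Prod.swap_prod_mk, Prod.mk.injEq, ite_and, mul_ite, mul_one,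
    mul_zero]
  rw [Finset.sum_eq_single a (by intro x _ hx; simp [hx]) (by simp),
    Finset.sum_eq_single b (by intro x _ hx; simp [hx]) (by simp)]
  simp only [if_true]

lemma Rconst_apply (N : ℕ) (q : ℂ) (p r : Fin N × Fin N) :
    Rconst N q p r = (if p = r then (if p.1 = p.2 then q else 1) else 0)
      + (if p = r.swap then (if p.1 < p.2 then q - q⁻¹ else 0) else 0) := by
  obtain ⟨a, b⟩ := p
  obtain ⟨c, d⟩ := r
  simp only [Rconst, sum_Icc_fin, Em_succ, Matrix.add_apply, Matrix.sum_apply, Matrix.smul_apply,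
    Matrix.kronecker_apply, Matrix.single_apply]
  congr 1
  · rw [Finset.sum_eq_single a (by intro x _ hx; simp [hx]) (by simp),
      Finset.sum_eq_single b (by intro x _ hx; simp [hx]) (by simp)]
    simp only [Nat.add_right_cancel_iff, Fin.val_inj, Prod.mk.injEq]
    split_ifs <;> simp_all
  · rw [Finset.sum_eq_single a (by intro x _ hx; simp [hx]) (by simp),
      Finset.sum_eq_single b (by intro x _ hx; simp [hx]) (by simp)]
    simp only [Nat.add_lt_add_iff_right, Fin.val_fin_lt, Prod.mk.injEq, Prod.swap_prod_mk]
    split_ifs <;> simp_all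

/-- Conjugation by the flip operator exchanges the two tensor factors. -/
lemma Pmat_conj_apply (N : ℕ) (X : Matrix (Fin N × Fin N) (Fin N × Fin N) ℂ)
    (p r : Fin N × Fin N) : (Pmat N * X * Pmat N) p r = X p.swap r.swap := by
  have h (s : Fin N × Fin N) : p = s.swap ↔ s = p.swap := by
    constructor <;> rintro rfl <;> simp
  simp [Matrix.mul_apply, Pmat_apply, h]

/-- The entry symmetries shared by all the R-matrices involved: `rev` says that reversing all
indices amounts to exchanging the tensor factors, `transp` that exchanging the tensor factors
amounts to transposing, and `weight` that the row and column index pairs of a nonzero entry agree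
up to order. -/
structure FlipSymm {N : ℕ} (X : Matrix (Fin N × Fin N) (Fin N × Fin N) ℂ) : Prop where
  rev : ∀ a b c d, X (Fin.rev a, Fin.rev b) (Fin.rev c, Fin.rev d) = X (b, a) (d, c)
  transp : ∀ p r, X p.swap r.swap = X r p
  weight : ∀ p r, X p r = 0 ∨ r = p ∨ r = p.swap

lemma flipSymm_Rconst (N : ℕ) (q : ℂ) : FlipSymm (Rconst N q) where
  rev a b c d := by
    simp only [Rconst_apply, Prod.mk.injEq, Prod.swap_prod_mk, Fin.rev_inj, Fin.rev_lt_rev]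
    congr 1 <;> simp only [and_comm, eq_comm]
  transp p r := by
    obtain ⟨a, b⟩ := p
    obtain ⟨c, d⟩ := r
    simp only [Rconst_apply, Prod.mk.injEq, Prod.swap_prod_mk]
    congr 1 <;> grind
  weight p r := by
    rw [Rconst_apply]
    by_cases h : p = r
    · exact Or.inr (Or.inl h.symm)
    · by_cases h' : p = r.swap
      · exact Or.inr (Or.inr (by rw [h', Prod.swap_swap]))
      · simp [h, h']

lemma FlipSymm.conj {N : ℕ} {X : Matrix (Fin N × Fin N) (Fin N × Fin N) ℂ} (hX : FlipSymm X) :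
    FlipSymm (Pmat N * X * Pmat N) where
  rev a b c d := by simpa [Pmat_conj_apply] using hX.rev b a d c
  transp p r := by simpa [Pmat_conj_apply] using (hX.transp r p).symm
  weight p r := by
    rw [Pmat_conj_apply, hX.transp]
    rcases hX.weight r p with h | h | h
    · exact Or.inl h
    · exact Or.inr (Or.inl h.symm)
    · exact Or.inr (Or.inr (by rw [h, Prod.swap_swap]))

lemma FlipSymm.lin {N : ℕ} {X Y : Matrix (Fin N × Fin N) (Fin N × Fin N) ℂ} (hX : FlipSymm X)
    (hY : FlipSymm Y) (x y : ℂ) : FlipSymm (x • X + y • Y) where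
  rev a b c d := by simp [hX.rev, hY.rev]
  transp p r := by simp [hX.transp, hY.transp]
  weight p r := by
    rcases hX.weight p r with h | h
    · rcases hY.weight p r with h' | h'
      · exact Or.inl (by simp [h, h'])
      · exact Or.inr h'
    · exact Or.inr h

lemma flipSymm_RBJ (N : ℕ) (q u : ℂ) : FlipSymm (RBJ N q u) :=
  (flipSymm_Rconst N q).lin (flipSymm_Rconst N q⁻¹).conj _ _

lemma antidiag_apply (N : ℕ) (c : ℕ → ℂ) (i j : Fin N) :
    (∑ i ∈ Finset.Icc 1 N, c i • Em N i (N + 1 - i)) i j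
      = if j = Fin.rev i then c (i + 1) else 0 := by
  have h (x : Fin N) : N + 1 - ((x : ℕ) + 1) = (Fin.rev x : ℕ) + 1 := by
    rw [Fin.val_rev]
    omega
  simp only [sum_Icc_fin, h, Em_succ, Matrix.sum_apply, Matrix.smul_apply, Matrix.single_apply]
  rw [Finset.sum_eq_single i (by intro x _ hx; simp [hx]) (by simp)]
  simp [eq_comm]

/-- For every invertible antidiagonal matrix
`J = Σ_{i=1}^N c_i E_{i, N-i+1}` and every `u ∈ ℂˣ` with `u ≠ q^{±2}`, one has
`(J⊗J) R(u) (J⊗J)⁻¹ = P R(u) P` and `P R(u) P = R(u)ᵀ`. -/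
theorem statement0 (N : ℕ) (hN : 2 ≤ N) (q : ℂ) (hq : q ≠ 0)
    (c : ℕ → ℂ) (hc : ∀ i ∈ Finset.Icc 1 N, c i ≠ 0)
    (J : Matrix (Fin N) (Fin N) ℂ)
    (hJ : J = ∑ i ∈ Finset.Icc 1 N, c i • Em N i (N + 1 - i))
    (u : ℂ) (hu0 : u ≠ 0) (hu1 : u ≠ q ^ 2) (hu2 : u ≠ q⁻¹ ^ 2) :
    (J ⊗ₖ J) * RBJ N q u * (J ⊗ₖ J)⁻¹ = Pmat N * RBJ N q u * Pmat N ∧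
      Pmat N * RBJ N q u * Pmat N = (RBJ N q u)ᵀ := by
  have hJ' (i j : Fin N) : J i j = if j = Fin.rev i then c (i + 1) else 0 := by
    rw [hJ, antidiag_apply]
  have hc' (i : Fin N) : c (i + 1) ≠ 0 := hc _ (by simp)
  have hR := flipSymm_RBJ N q u
  have hK (p r : Fin N × Fin N) : (J ⊗ₖ J) p r =
      if r = (Fin.rev p.1, Fin.rev p.2) then c (p.1 + 1) * c (p.2 + 1) else 0 := by
    rw [Matrix.kronecker_apply, hJ', hJ']
    by_cases h₁ : r.1 = Fin.rev p.1 <;> by_cases h₂ : r.2 = Fin.rev p.2 <;>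
      simp [h₁, h₂, Prod.ext_iff]
  refine ⟨?_, ?_⟩
  · obtain ⟨B, hinv⟩ : ∃ B : Matrix (Fin N) (Fin N) ℂ, J * B = 1 := by
      refine ⟨Matrix.of fun i j => if i = Fin.rev j then (c (j + 1))⁻¹ else 0, ?_⟩
      ext i j
      simp only [Matrix.mul_apply, hJ', Matrix.of_apply, ite_mul, zero_mul,
        Finset.sum_ite_eq', Finset.mem_univ, if_true, Matrix.one_apply,
        Fin.rev_inj]
      split_ifs with h
      · rw [h, mul_inv_cancel₀ (hc' j)]
      · rw [mul_zero]
    have hdet : IsUnit (J ⊗ₖ J).det := by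
      refine Matrix.isUnit_det_of_right_inverse (B := B ⊗ₖ B) ?_
      rw [← Matrix.mul_kronecker_mul, hinv, Matrix.one_kronecker_one]
    have key : (J ⊗ₖ J) * RBJ N q u = Pmat N * RBJ N q u * Pmat N * (J ⊗ₖ J) := by
      ext ⟨a, b⟩ ⟨d, e⟩
      have hflip (s : Fin N × Fin N) :
          (d, e) = (Fin.rev s.1, Fin.rev s.2) ↔ s = (Fin.rev d, Fin.rev e) := by
        constructor
        · intro h
          simp only [Prod.mk.injEq] at h
          simp [h.1, h.2]
        · rintro rfl
          simp
      simp only [Matrix.mul_apply (M := J ⊗ₖ J), Matrix.mul_apply (N := J ⊗ₖ J), hK, hflip,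
        Pmat_conj_apply, ite_mul, zero_mul, mul_ite, mul_zero, Finset.sum_ite_eq',
        Finset.mem_univ, if_true, Prod.swap_prod_mk]
      have h1 := hR.rev a b (Fin.rev d) (Fin.rev e)
      simp only [Fin.rev_rev] at h1
      rw [h1]
      -- Off the weight-conserving entries both sides vanish; on them `{a, b} = {rev d, rev e}`,
      -- so the two products of coefficients of `J` agree.
      rcases hR.weight (b, a) (Fin.rev e, Fin.rev d) with h | h | h
      · simp [h]
      · simp only [Prod.mk.injEq] at h
        rw [h.1, h.2]
        ring
      · simp only [Prod.mk.injEq, Prod.swap_prod_mk] at h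
        rw [h.1, h.2]
        ring
    rw [key, Matrix.mul_nonsing_inv_cancel_right _ _ hdet]
  · ext p r
    rw [Pmat_conj_apply, Matrix.transpose_apply, hR.transp]

end
end

section
/- If an N×N matrix-valued function K satisfies the untwisted reflection equation (RE), then the transposed function u ↦ K(u)^T also satisfies the untwisted reflection equation (RE). -/
/-!
The reflection equation is invariant under transposition, for each pair `(u, v)` separately.

The transpose of `E_{ij} ⊗ E_{ji}` is `E_{ji} ⊗ E_{ij}`, which is also its conjugate by the flip
`P`. Hence `R_qᵀ = P R_q P`, and since `P² = 1` and `Pᵀ = P` also `R(u)ᵀ = R21(u)`. As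
transposition reverses products and sends `K1`, `K2` to `(Kᵀ)1`, `(Kᵀ)2`, it turns each side of
the reflection equation for `K` into the other side of the reflection equation for `Kᵀ`.
-/

open Matrix
open scoped Kronecker

noncomputable section

theorem Em_transpose (N a b : ℕ) : (Em N a b)ᵀ = Em N b a := by
  ext i j
  simp [Em, and_comm]

theorem Pmat_eq (N : ℕ) :
    Pmat N = (1 : Matrix (Fin N × Fin N) (Fin N × Fin N) ℂ).submatrix Prod.swap id := by
  ext ⟨a, b⟩ ⟨c, d⟩
  -- Only `i = a + 1`, `j = c + 1` contributes, because `Em` uses one-based indices.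
  have key : ∀ i j : ℕ, Em N i j a c * Em N j i b d =
      if (a : ℕ) + 1 = i then
        (if (c : ℕ) + 1 = j then (if b = c ∧ a = d then 1 else 0) else 0) else 0 := by
    intro i j
    simp only [Em, Matrix.of_apply, Fin.ext_iff]
    split_ifs <;> first | omega | simp
  have ha : (a : ℕ) + 1 ≤ N := a.2
  have hc : (c : ℕ) + 1 ≤ N := c.2
  simp [Pmat, Matrix.sum_apply, Matrix.one_apply, key, ha, hc]

theorem Pmat_conj (N : ℕ) (M : Matrix (Fin N × Fin N) (Fin N × Fin N) ℂ) :
    Pmat N * M * Pmat N = M.submatrix Prod.swap Prod.swap := by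
  ext p r
  rw [Pmat_eq]
  have h : ∀ x : Fin N × Fin N, x.swap = r ↔ x = r.swap := fun x =>
    ⟨fun h => by rw [← h, Prod.swap_swap], fun h => by rw [h, Prod.swap_swap]⟩
  simp [Matrix.mul_apply, Matrix.one_apply, h]

theorem kronecker_swap (N : ℕ) (A B : Matrix (Fin N) (Fin N) ℂ) :
    (A ⊗ₖ B).submatrix Prod.swap Prod.swap = B ⊗ₖ A := by
  ext p r
  simp [mul_comm]

theorem Rconst_transpose (N : ℕ) (q : ℂ) :
    (Rconst N q)ᵀ = Pmat N * Rconst N q * Pmat N := by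
  rw [Pmat_conj]
  have hk : ∀ A B : Matrix (Fin N) (Fin N) ℂ, ∀ p r : Fin N × Fin N,
      (A ⊗ₖ B) p.swap r.swap = (B ⊗ₖ A) p r := fun A B p r =>
    congrFun (congrFun (kronecker_swap N A B) p) r
  have ht : ∀ (a b c d : ℕ) (p r : Fin N × Fin N),
      (Em N a b ⊗ₖ Em N c d) r p = (Em N b a ⊗ₖ Em N d c) p r := fun a b c d p r => by
    rw [← Em_transpose N a b, ← Em_transpose N c d]
    rfl
  ext p r
  simp only [Rconst, Matrix.transpose_apply, Matrix.submatrix_apply, Matrix.add_apply,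
    Matrix.sum_apply, Matrix.smul_apply, hk]
  congr 1
  · rw [Finset.sum_comm]
    refine Finset.sum_congr rfl fun i _ => Finset.sum_congr rfl fun j _ => ?_
    rw [ht]
    simp only [eq_comm]
  · refine Finset.sum_congr rfl fun i _ => Finset.sum_congr rfl fun j _ => ?_
    rw [ht]

theorem RBJ_transpose (N : ℕ) (q u : ℂ) : (RBJ N q u)ᵀ = R21 N q u := by
  have h : ∀ x, Pmat N * Rconst N x * Pmat N = (Rconst N x)ᵀ :=
    fun x => (Rconst_transpose N x).symm
  have h' : ∀ x, (Rconst N x)ᵀ.submatrix Prod.swap Prod.swap = Rconst N x := fun x => by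
    rw [Rconst_transpose, Pmat_conj, Matrix.submatrix_submatrix, Prod.swap_swap_eq,
      Matrix.submatrix_id_id]
  have h'' : ∀ x, (Rconst N x).submatrix Prod.swap Prod.swap = (Rconst N x)ᵀ := fun x => by
    rw [Rconst_transpose, Pmat_conj]
  simp [R21, RBJ, h, Pmat_conj, Matrix.submatrix_add, Matrix.submatrix_smul, h', h'']

theorem R21_transpose (N : ℕ) (q u : ℂ) : (R21 N q u)ᵀ = RBJ N q u := by
  rw [← RBJ_transpose, Matrix.transpose_transpose]

theorem M1_transpose (N : ℕ) (X : Matrix (Fin N) (Fin N) ℂ) : (M1 N X)ᵀ = M1 N Xᵀ := by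
  rw [M1, M1, ← Matrix.kroneckerMap_transpose, Matrix.transpose_one]

theorem M2_transpose (N : ℕ) (X : Matrix (Fin N) (Fin N) ℂ) : (M2 N X)ᵀ = M2 N Xᵀ := by
  rw [M2, M2, ← Matrix.kroneckerMap_transpose, Matrix.transpose_one]

/-- if `K` solves the untwisted reflection equation (RE), then so does
the transposed function `u ↦ K(u)ᵀ`. -/
theorem statement6 (N : ℕ) (hN : 2 ≤ N) (q : ℂ) (hq : q ≠ 0)
    (K : ℂ → Matrix (Fin N) (Fin N) ℂ) (hK : IsRESol N q K) :
    IsRESol N q (fun u => (K u)ᵀ) := by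
  intro u v hu hv h1 h2 h3 h4
  have h := congrArg Matrix.transpose (hK u v hu hv h1 h2 h3 h4)
  simp only [Matrix.transpose_mul, R21_transpose, RBJ_transpose, M1_transpose,
    M2_transpose] at h
  simp only [REeq, Matrix.mul_assoc]
  exact h.symm

end
end

section
/- Let (ℓ, r, σ) ∈ Σ^sym_N and λ ∈ ℂ^×, and define the N×N matrices G = Σ_{r<i<σ(r)} λ E_{ii} + Σ_{ℓ<i≤r} ( E_{i,σ(i)} + E_{σ(i),i} + (λ−λ^{-1}) E_{σ(i),σ(i)} ) and Q = Σ_{1≤i≤ℓ} E_{ii}. Then: (a) if ℓ = 0, (G − λI)(G + λ^{-1}I) = 0; (b) if ℓ > 0, (G − λI)(G + λ^{-1}I)G = 0, Q² = Q, GQ = QG = 0, and Q = I + (λ − λ^{-1})G − G². -/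
/-!
Write `s = N + ℓ + 1`, so that `σ(i) = s - i` on the moved indices. Row by row, `G` vanishes on
`i ≤ ℓ`, is multiplication by `λ` on the fixed indices `r < i < s - r`, and on each pair
`{i, s - i}` with `ℓ < i ≤ r` is the block `!![0, 1; 1, λ - λ⁻¹]`, whose square is
`(λ - λ⁻¹) G + 1` by Cayley–Hamilton; the scalar `λ` satisfies the same quadratic. Hence
`G² = (λ - λ⁻¹) G + 1 - Q` (`Gsym_mul_self`), while `Q` is the complementary diagonal projection.
All claims follow from this together with `GQ = QG = 0`, since `(G - λ)(G + λ⁻¹) = -Q`, and `Q = 0`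
when `ℓ = 0`. The products are computed from the entries of `G` (`Gsym_apply`) through the
resulting row formulas for `G * M`.
-/

open Matrix
open scoped Kronecker

noncomputable section

/-- The involution `σ` of `{1, …, N}` attached to `(ℓ, r) ∈ Σ^sym_N`:
`σ(i) = N + ℓ - i + 1` for `ℓ < i ≤ r` (and for the mirror range), `σ(i) = i`
otherwise. -/
def sigSym (N ℓ r i : ℕ) : ℕ :=
  if (ℓ < i ∧ i ≤ r) ∨ (N + ℓ + 1 - r ≤ i ∧ i ≤ N) then N + ℓ + 1 - i else i

/-- `G = Σ_{r<i<σ(r)} λ E_{ii} + Σ_{ℓ<i≤r} ( E_{i,σ(i)} + E_{σ(i),i} + (λ-λ⁻¹) E_{σ(i),σ(i)} )`. -/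
def Gsym (N ℓ r : ℕ) (lam : ℂ) : Matrix (Fin N) (Fin N) ℂ :=
  (∑ i ∈ Finset.Ioo r (sigSym N ℓ r r), lam • Em N i i)
    + ∑ i ∈ Finset.Icc (ℓ + 1) r,
        (Em N i (sigSym N ℓ r i) + Em N (sigSym N ℓ r i) i
          + (lam - lam⁻¹) • Em N (sigSym N ℓ r i) (sigSym N ℓ r i))

/-- `Q = Σ_{1≤i≤ℓ} E_{ii}`. -/
def Qsym (N ℓ : ℕ) : Matrix (Fin N) (Fin N) ℂ :=
  ∑ i ∈ Finset.Icc 1 ℓ, Em N i i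

/-- The entries of `G` in row `i + 1`, split according to the range containing `i + 1`. -/
lemma Gsym_apply (N ℓ r : ℕ) (hlr : ℓ < r) (hr : 2 * r ≤ N + ℓ) (lam : ℂ) (i j : Fin N) :
    Gsym N ℓ r lam i j =
      if (i : ℕ) + 1 ≤ ℓ then 0
      else if (i : ℕ) + 1 ≤ r then (if (i : ℕ) + j + 1 = N + ℓ then 1 else 0)
      else if (i : ℕ) + r < N + ℓ then (if i = j then lam else 0)
      else (if (i : ℕ) + j + 1 = N + ℓ then 1 else 0)
        + (if i = j then lam - lam⁻¹ else 0) := by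
  have hi := i.2
  have hj := j.2
  have hs : sigSym N ℓ r r = N + ℓ + 1 - r := by
    unfold sigSym
    rw [if_pos (Or.inl ⟨hlr, le_rfl⟩)]
  have e1 : (∑ x ∈ Finset.Ioo r (N + ℓ + 1 - r), lam • Em N x x) i j
      = if r < (i : ℕ) + 1 ∧ (i : ℕ) + r < N + ℓ ∧ i = j then lam else 0 := by
    have : ∀ x ∈ Finset.Ioo r (N + ℓ + 1 - r), (lam • Em N x x) i j
        = if (i : ℕ) + 1 = x then (if i = j then lam else 0) else 0 := by
      intro x _
      simp only [Em, Matrix.smul_apply, Matrix.of_apply, smul_eq_mul, Fin.ext_iff]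
      split_ifs <;> first | omega | simp
    rw [Matrix.sum_apply, Finset.sum_congr rfl this, Finset.sum_ite_eq]
    simp only [Finset.mem_Ioo]
    split_ifs <;> first | omega | rfl
  have e2 : (∑ x ∈ Finset.Icc (ℓ + 1) r,
        (Em N x (sigSym N ℓ r x) + Em N (sigSym N ℓ r x) x
          + (lam - lam⁻¹) • Em N (sigSym N ℓ r x) (sigSym N ℓ r x))) i j
      = (if (ℓ < (i : ℕ) + 1 ∧ (i : ℕ) + 1 ≤ r) ∧ (i : ℕ) + j + 1 = N + ℓ then 1 else 0)
        + (if N + ℓ ≤ (i : ℕ) + r ∧ (i : ℕ) + j + 1 = N + ℓ then 1 else 0)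
        + (if N + ℓ ≤ (i : ℕ) + r ∧ i = j then lam - lam⁻¹ else 0) := by
    have : ∀ x ∈ Finset.Icc (ℓ + 1) r,
        (Em N x (sigSym N ℓ r x) + Em N (sigSym N ℓ r x) x
          + (lam - lam⁻¹) • Em N (sigSym N ℓ r x) (sigSym N ℓ r x)) i j
        = (if (i : ℕ) + 1 = x then (if (i : ℕ) + j + 1 = N + ℓ then 1 else 0) else 0)
          + (if N + ℓ - i = x then (if (i : ℕ) + j + 1 = N + ℓ then 1 else 0) else 0)
          + (if N + ℓ - i = x then (if i = j then lam - lam⁻¹ else 0) else 0) := by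
      intro x hx
      rw [Finset.mem_Icc] at hx
      have hsx : sigSym N ℓ r x = N + ℓ + 1 - x := by
        unfold sigSym
        rw [if_pos (Or.inl ⟨by omega, hx.2⟩)]
      rw [hsx]
      simp only [Em, Matrix.add_apply, Matrix.smul_apply, Matrix.of_apply, smul_eq_mul,
        Fin.ext_iff]
      congr 1
      · congr 1
        · split_ifs <;> first | omega | rfl
        · split_ifs <;> first | omega | rfl
      · split_ifs <;> first | omega | simp
    rw [Matrix.sum_apply, Finset.sum_congr rfl this, Finset.sum_add_distrib,
      Finset.sum_add_distrib, Finset.sum_ite_eq, Finset.sum_ite_eq, Finset.sum_ite_eq]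
    simp only [Finset.mem_Icc]
    congr 1
    · congr 1
      · split_ifs <;> first | omega | rfl
      · split_ifs <;> first | omega | rfl
    · split_ifs <;> first | omega | rfl
  rw [Gsym, hs, Matrix.add_apply, e1, e2]
  split_ifs <;> first | omega | simp

lemma Qsym_eq_diagonal (N ℓ : ℕ) :
    Qsym N ℓ = Matrix.diagonal fun i : Fin N => if (i : ℕ) + 1 ≤ ℓ then 1 else 0 := by
  ext i j
  have : ∀ x ∈ Finset.Icc 1 ℓ, Em N x x i j
      = if (i : ℕ) + 1 = x then (if i = j then 1 else 0) else 0 := by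
    intro x _
    simp only [Em, Matrix.of_apply, Fin.ext_iff]
    split_ifs <;> first | omega | rfl
  rw [Qsym, Matrix.sum_apply, Finset.sum_congr rfl this, Finset.sum_ite_eq,
    Matrix.diagonal_apply]
  simp only [Finset.mem_Icc]
  split_ifs <;> first | omega | rfl

lemma Qsym_mul_self (N ℓ : ℕ) : Qsym N ℓ * Qsym N ℓ = Qsym N ℓ := by
  rw [Qsym_eq_diagonal, Matrix.diagonal_mul_diagonal]
  simp

lemma Qsym_mul_Gsym (N ℓ r : ℕ) (hlr : ℓ < r) (hr : 2 * r ≤ N + ℓ) (lam : ℂ) :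
    Qsym N ℓ * Gsym N ℓ r lam = 0 := by
  ext i j
  rw [Qsym_eq_diagonal, Matrix.diagonal_mul, Gsym_apply N ℓ r hlr hr]
  by_cases h : (i : ℕ) + 1 ≤ ℓ <;> simp [h]

lemma Gsym_mul_Qsym (N ℓ r : ℕ) (hlr : ℓ < r) (hr : 2 * r ≤ N + ℓ) (lam : ℂ) :
    Gsym N ℓ r lam * Qsym N ℓ = 0 := by
  ext i j
  have hi := i.2
  rw [Qsym_eq_diagonal, Matrix.mul_diagonal, Gsym_apply N ℓ r hlr hr]
  simp only [Fin.ext_iff, Matrix.zero_apply]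
  split_ifs <;> first | omega | simp

/-- The quadratic relation satisfied by `G` off the image of `Q`. -/
lemma Gsym_mul_self (N ℓ r : ℕ) (hlr : ℓ < r) (hr : 2 * r ≤ N + ℓ) (lam : ℂ)
    (hlam : lam ≠ 0) :
    Gsym N ℓ r lam * Gsym N ℓ r lam = (lam - lam⁻¹) • Gsym N ℓ r lam + 1 - Qsym N ℓ := by
  ext i j
  have hi := i.2
  have hj := j.2
  simp only [Matrix.sub_apply, Matrix.add_apply, Matrix.smul_apply, smul_eq_mul,
    Qsym_eq_diagonal, Matrix.diagonal_apply, Matrix.one_apply]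
  rw [Matrix.mul_apply]
  by_cases h1 : (i : ℕ) + 1 ≤ ℓ
  · simp [Gsym_apply N ℓ r hlr hr lam i, h1]
  by_cases h3 : r < (i : ℕ) + 1 ∧ (i : ℕ) + r < N + ℓ
  · have h2 : ¬ (i : ℕ) + 1 ≤ r := by omega
    simp only [Gsym_apply N ℓ r hlr hr lam i, h1, h2, h3.2, if_true, if_false, ite_mul, zero_mul,
      Finset.sum_ite_eq, Finset.mem_univ]
    split_ifs
    · field_simp
      ring
    · simp
  -- `k` is the mirror index `σ(i)`, shifted to the 0-based convention of `Fin N`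
  obtain ⟨k, hk⟩ : ∃ k : Fin N, (i : ℕ) + k + 1 = N + ℓ := ⟨⟨N + ℓ - i - 1, by omega⟩, by
    change (i : ℕ) + (N + ℓ - i - 1) + 1 = N + ℓ
    omega⟩
  have hk' : ∀ x : Fin N, ((i : ℕ) + x + 1 = N + ℓ) = (k = x) := by
    intro x
    rw [Fin.ext_iff, eq_iff_iff]
    omega
  by_cases h2 : (i : ℕ) + 1 ≤ r
  · simp only [Gsym_apply N ℓ r hlr hr lam i, h1, h2, hk', if_true, if_false, ite_mul, zero_mul,
      one_mul, Finset.sum_ite_eq, Finset.mem_univ]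
    rw [Gsym_apply N ℓ r hlr hr lam k]
    simp only [Fin.ext_iff]
    split_ifs <;> first | omega | simp
  · have h4 : ¬ (i : ℕ) + r < N + ℓ := by omega
    have row : ∀ x, Gsym N ℓ r lam i x
        = (if k = x then 1 else 0) + (if i = x then lam - lam⁻¹ else 0) := by
      intro x
      simp only [Gsym_apply N ℓ r hlr hr lam i, h1, h2, h4, hk', if_false]
    have h5 : Gsym N ℓ r lam k j = if i = j then 1 else 0 := by
      rw [Gsym_apply N ℓ r hlr hr lam k]
      simp only [Fin.ext_iff]
      split_ifs <;> first | omega | rfl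
    have h6 : ∑ x, Gsym N ℓ r lam i x * Gsym N ℓ r lam x j
        = Gsym N ℓ r lam k j + (lam - lam⁻¹) * Gsym N ℓ r lam i j := by
      simp only [row, add_mul, ite_mul, one_mul, zero_mul, Finset.sum_add_distrib,
        Finset.sum_ite_eq, Finset.mem_univ, if_true]
    rw [h6, h5]
    simp only [h1, if_false, ite_self, sub_zero]
    ring

/-- The factored quadratic in `G` is the projection onto its kernel, up to sign. -/
lemma Gsym_factor (N ℓ r : ℕ) (hlr : ℓ < r) (hr : 2 * r ≤ N + ℓ) (lam : ℂ) (hlam : lam ≠ 0) :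
    (Gsym N ℓ r lam - lam • 1) * (Gsym N ℓ r lam + lam⁻¹ • 1) = -Qsym N ℓ := by
  rw [sub_mul, mul_add, mul_add, Gsym_mul_self N ℓ r hlr hr lam hlam]
  simp only [Matrix.smul_mul, Matrix.mul_smul, one_mul, mul_one, smul_smul,
    inv_mul_cancel₀ hlam, one_smul, sub_smul]
  abel

/-- minimal polynomial identities for the matrices `G` and `Q`
attached to `(ℓ, r, σ) ∈ Σ^sym_N` and `λ ∈ ℂˣ`. -/
theorem statement11 (N : ℕ) (hN : 2 ≤ N) (ℓ r : ℕ) (hlr : ℓ < r) (hr : 2 * r ≤ N + ℓ)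
    (lam : ℂ) (hlam : lam ≠ 0) :
    (ℓ = 0 →
      (Gsym N ℓ r lam - lam • 1) * (Gsym N ℓ r lam + lam⁻¹ • 1) = 0) ∧
    (0 < ℓ →
      (Gsym N ℓ r lam - lam • 1) * (Gsym N ℓ r lam + lam⁻¹ • 1) * Gsym N ℓ r lam = 0 ∧
      Qsym N ℓ * Qsym N ℓ = Qsym N ℓ ∧
      Gsym N ℓ r lam * Qsym N ℓ = 0 ∧
      Qsym N ℓ * Gsym N ℓ r lam = 0 ∧
      Qsym N ℓ = 1 + (lam - lam⁻¹) • Gsym N ℓ r lam - Gsym N ℓ r lam * Gsym N ℓ r lam) := by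
  have hF := Gsym_factor N ℓ r hlr hr lam hlam
  have hQG := Qsym_mul_Gsym N ℓ r hlr hr lam
  refine ⟨fun h0 => ?_, fun _ => ⟨?_, Qsym_mul_self N ℓ, Gsym_mul_Qsym N ℓ r hlr hr lam, hQG, ?_⟩⟩
  · rw [hF, h0]
    simp [Qsym]
  · rw [hF, neg_mul, hQG, neg_zero]
  · rw [Gsym_mul_self N ℓ r hlr hr lam hlam]
    abel

end
end
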